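/- arXiv:2009.10302 — 3 statements merged into one kernel-verified Lean document; each statement's English description precedes it below -/
import Mathlib

section
/- For every ε > 0 and every t > 0, the radial Eguchi–Hanson potential satisfies the Monge–Ampère equation (deriv ψ_ε t)·(deriv ψ_ε t + t·deriv (deriv ψ_ε) t) = 1, where deriv denotes the derivative of a real function; this expresses that the volume form of the Eguchi–Hanson Kähler form i∂∂̄F_ε on (ℂ²∖{0})/±1 equals the Euclidean volume form, i.e. the Eguchi–Hanson metric is Ricci-flat. -/
/-- The radial Eguchi–Hanson potential `ψ_ε(t)` in the variable `t = ‖z‖²`. -/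
noncomputable def radialEH (ε : ℝ) (t : ℝ) : ℝ :=
  Real.sqrt (t ^ 2 + ε ^ 2) + ε * Real.log (t / (Real.sqrt (t ^ 2 + ε ^ 2) + ε))

/-!
Since `ψ' + t ψ'' = (t ψ')'`, the Monge–Ampère expression depends only on `s = t ψ'`: it equals
`s s' / t = (s ^ 2)' / (2 t)`. For the Eguchi–Hanson potential `s = √(t ^ 2 + ε ^ 2)`, so
`(s ^ 2)' = 2 t`.
-/

open Topology

theorem deriv_mul_deriv_add_mul_deriv_deriv_of_deriv_eq_div {𝕜 : Type*}
    [NontriviallyNormedField 𝕜] {ψ s : 𝕜 → 𝕜} {s' t : 𝕜} (ht : t ≠ 0)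
    (hψ : ∀ᶠ x in 𝓝 t, deriv ψ x = s x / x) (hs : HasDerivAt s s' t) :
    deriv ψ t * (deriv ψ t + t * deriv (deriv ψ) t) = s t * s' / t := by
  have first : deriv ψ t = s t / t := hψ.self_of_nhds
  have second : deriv (deriv ψ) t = (s' * t - s t * 1) / t ^ 2 :=
    (Filter.EventuallyEq.deriv_eq hψ).trans (hs.fun_div (hasDerivAt_id' t) ht).deriv
  rw [first, second]
  field_simp
  ring

theorem hasDerivAt_sqrt_sq_add {c t : ℝ} (h : t ^ 2 + c ≠ 0) :
    HasDerivAt (fun x ↦ √(x ^ 2 + c)) (t / √(t ^ 2 + c)) t := by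
  have inner : HasDerivAt (fun x ↦ x ^ 2 + c) (2 * t) t := by
    simpa using (hasDerivAt_pow 2 t).add_const c
  exact (inner.sqrt h).congr_deriv (mul_div_mul_left _ _ two_ne_zero)

theorem abs_lt_sqrt_sq_add_sq {t : ℝ} (ht : t ≠ 0) (ε : ℝ) : |ε| < √(t ^ 2 + ε ^ 2) :=
  Real.lt_sqrt_of_sq_lt <| by
    rw [sq_abs]
    exact lt_add_of_pos_left _ (sq_pos_of_ne_zero ht)

theorem sqrt_sq_add_sq_add_pos {t : ℝ} (ht : t ≠ 0) (ε : ℝ) : 0 < √(t ^ 2 + ε ^ 2) + ε := by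
  linarith [neg_abs_le ε, abs_lt_sqrt_sq_add_sq ht ε]

theorem hasDerivAt_log_div_sqrt_add {t : ℝ} (ht : t ≠ 0) (ε : ℝ) :
    HasDerivAt (fun x ↦ Real.log (x / (√(x ^ 2 + ε ^ 2) + ε))) (ε / (t * √(t ^ 2 + ε ^ 2))) t := by
  have denom_ne : √(t ^ 2 + ε ^ 2) + ε ≠ 0 := (sqrt_sq_add_sq_add_pos ht ε).ne'
  have sqrt_ne : √(t ^ 2 + ε ^ 2) ≠ 0 := by positivity
  have sq_sqrt : √(t ^ 2 + ε ^ 2) ^ 2 = t ^ 2 + ε ^ 2 := Real.sq_sqrt (by positivity)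
  have denom_deriv := (hasDerivAt_sqrt_sq_add (c := ε ^ 2) (t := t) (by positivity)).add_const ε
  refine (((hasDerivAt_id' t).fun_div denom_deriv denom_ne).log
    (div_ne_zero ht denom_ne)).congr_deriv ?_
  field_simp
  linear_combination sq_sqrt

theorem hasDerivAt_radialEH {t : ℝ} (ht : t ≠ 0) (ε : ℝ) :
    HasDerivAt (radialEH ε) (√(t ^ 2 + ε ^ 2) / t) t := by
  have sqrt_ne : √(t ^ 2 + ε ^ 2) ≠ 0 := by positivity
  have sq_sqrt : √(t ^ 2 + ε ^ 2) ^ 2 = t ^ 2 + ε ^ 2 := Real.sq_sqrt (by positivity)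
  refine ((hasDerivAt_sqrt_sq_add (by positivity)).add
    ((hasDerivAt_log_div_sqrt_add ht ε).const_mul ε)).congr_deriv ?_
  field_simp
  exact sq_sqrt.symm

/-- Monge–Ampère equation for the radial Eguchi–Hanson potential:
`ψ_ε'(t)·(ψ_ε'(t) + t·ψ_ε''(t)) = 1` for all `ε > 0`, `t > 0`.  This expresses that the
volume form of the Eguchi–Hanson Kähler form equals the Euclidean volume form, i.e. the
Eguchi–Hanson metric is Ricci-flat. -/
theorem radialEH_mongeAmpere (ε t : ℝ) (hε : 0 < ε) (ht : 0 < t) :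
    deriv (radialEH ε) t *
      (deriv (radialEH ε) t + t * deriv (deriv (radialEH ε)) t) = 1 := by
  have deriv_eq : ∀ᶠ x in 𝓝 t, deriv (radialEH ε) x = √(x ^ 2 + ε ^ 2) / x :=
    (eventually_ne_nhds ht.ne').mono fun x hx ↦ (hasDerivAt_radialEH hx ε).deriv
  have sqrt_deriv := hasDerivAt_sqrt_sq_add (c := ε ^ 2) (t := t) (by positivity)
  rw [deriv_mul_deriv_add_mul_deriv_deriv_of_deriv_eq_div ht.ne' deriv_eq sqrt_deriv]
  field_simp
end

section
/- There exists a constant C > 0 such that for every ε ∈ (0,1] and every z ∈ ℂ² with ‖z‖ ≥ 2, the error term satisfies |F_ε(z) − ‖z‖²| ≤ C·ε²·(√ε + ‖z‖)⁻². -/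
/-- The Eguchi–Hanson potential `F ε` on `ℂ² ∖ {0}`. -/
noncomputable def eguchiHanson (ε : ℝ) (z : EuclideanSpace ℂ (Fin 2)) : ℝ :=
  Real.sqrt (‖z‖ ^ 4 + ε ^ 2) +
    ε * Real.log (‖z‖ ^ 2 / (Real.sqrt (‖z‖ ^ 4 + ε ^ 2) + ε))

/-- The radial profile of the Eguchi–Hanson potential. The potential is homogeneous of degree one
in `(‖z‖ ^ 2, ε)`, so it equals `‖z‖ ^ 2` times this function of the single variable
`t = ε / ‖z‖ ^ 2`, and its distance to `‖z‖ ^ 2` is governed by the profile near `t = 0`. -/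
noncomputable def eguchiHansonProfile (t : ℝ) : ℝ :=
  √(1 + t ^ 2) - t * Real.arsinh t

theorem abs_arsinh_le_abs (x : ℝ) : |Real.arsinh x| ≤ |x| :=
  calc |Real.arsinh x| ≤ Real.sinh |Real.arsinh x| := Real.self_le_sinh_iff.mpr (abs_nonneg _)
    _ = |x| := by rw [← Real.abs_sinh, Real.sinh_arsinh]

theorem mul_arsinh_nonneg (x : ℝ) : 0 ≤ x * Real.arsinh x := by
  rcases le_total 0 x with hx | hx
  · exact mul_nonneg hx (Real.arsinh_nonneg_iff.mpr hx)
  · exact mul_nonneg_of_nonpos_of_nonpos hx (Real.arsinh_nonpos_iff.mpr hx)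

theorem mul_arsinh_le_sq (x : ℝ) : x * Real.arsinh x ≤ x ^ 2 :=
  calc x * Real.arsinh x ≤ |x| * |Real.arsinh x| := (le_abs_self _).trans_eq (abs_mul _ _)
    _ ≤ |x| * |x| :=
        mul_le_mul_of_nonneg_left (abs_arsinh_le_abs x) (abs_nonneg x)
    _ = x ^ 2 := by rw [abs_mul_abs_self, sq]

theorem abs_eguchiHansonProfile_sub_one_le (t : ℝ) : |eguchiHansonProfile t - 1| ≤ t ^ 2 := by
  have one_le_sqrt : 1 ≤ √(1 + t ^ 2) := Real.one_le_sqrt.mpr (by linarith [sq_nonneg t])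
  have sqrt_le : √(1 + t ^ 2) ≤ 1 + t ^ 2 / 2 := Real.sqrt_one_add_le (by linarith [sq_nonneg t])
  have split : eguchiHansonProfile t - 1 = (√(1 + t ^ 2) - 1) - t * Real.arsinh t := by
    rw [eguchiHansonProfile, sub_right_comm]
  rw [split]
  exact abs_sub_le_of_nonneg_of_le (sub_nonneg.mpr one_le_sqrt) (by linarith [sq_nonneg t])
    (mul_arsinh_nonneg t) (mul_arsinh_le_sq t)

theorem sqrt_sq_add_sq_eq_mul_sqrt {r : ℝ} (hr : 0 < r) (x : ℝ) :
    √(r ^ 2 + x ^ 2) = r * √(1 + (x / r) ^ 2) := by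
  have factor : r ^ 2 + x ^ 2 = r ^ 2 * (1 + (x / r) ^ 2) := by field_simp
  rw [factor, Real.sqrt_mul (sq_nonneg r), Real.sqrt_sq hr.le]

theorem log_div_sqrt_sq_add_sq_add {r : ℝ} (hr : 0 < r) (x : ℝ) :
    Real.log (r / (√(r ^ 2 + x ^ 2) + x)) = -Real.arsinh (x / r) := by
  rw [Real.arsinh, ← Real.log_inv, sqrt_sq_add_sq_eq_mul_sqrt hr]
  congr 1
  field_simp
  rw [add_comm]

theorem eguchiHanson_eq_norm_sq_mul_profile (ε : ℝ) {z : EuclideanSpace ℂ (Fin 2)} (hz : z ≠ 0) :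
    eguchiHanson ε z = ‖z‖ ^ 2 * eguchiHansonProfile (ε / ‖z‖ ^ 2) := by
  have hr : 0 < ‖z‖ ^ 2 := pow_pos (norm_pos_iff.mpr hz) 2
  have norm_pow_four : ‖z‖ ^ 4 = (‖z‖ ^ 2) ^ 2 := by ring
  rw [eguchiHanson, eguchiHansonProfile, norm_pow_four, log_div_sqrt_sq_add_sq_add hr,
    sqrt_sq_add_sq_eq_mul_sqrt hr]
  field_simp
  ring

theorem abs_eguchiHanson_sub_norm_sq_le (ε : ℝ) {z : EuclideanSpace ℂ (Fin 2)} (hz : z ≠ 0) :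
    |eguchiHanson ε z - ‖z‖ ^ 2| ≤ ε ^ 2 / ‖z‖ ^ 2 := by
  have hnorm : ‖z‖ ≠ 0 := norm_ne_zero_iff.mpr hz
  calc |eguchiHanson ε z - ‖z‖ ^ 2|
      = ‖z‖ ^ 2 * |eguchiHansonProfile (ε / ‖z‖ ^ 2) - 1| := by
        rw [eguchiHanson_eq_norm_sq_mul_profile ε hz, ← mul_sub_one, abs_mul,
          abs_of_nonneg (sq_nonneg ‖z‖)]
    _ ≤ ‖z‖ ^ 2 * (ε / ‖z‖ ^ 2) ^ 2 := by
        gcongr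
        exact abs_eguchiHansonProfile_sub_one_le _
    _ = ε ^ 2 / ‖z‖ ^ 2 := by field_simp

theorem eguchiHanson_error_bound_far_general {c ε : ℝ} (hc : 0 < c) (hε : 0 < ε)
    {z : EuclideanSpace ℂ (Fin 2)} (hz : c * √ε ≤ ‖z‖) :
    |eguchiHanson ε z - ‖z‖ ^ 2| ≤ (1 + c⁻¹) ^ 2 * ε ^ 2 * (√ε + ‖z‖)⁻¹ ^ 2 := by
  have hnorm : 0 < ‖z‖ := lt_of_lt_of_le (by positivity) hz
  have sqrt_add_norm_le : √ε + ‖z‖ ≤ (1 + c⁻¹) * ‖z‖ := by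
    have : √ε ≤ c⁻¹ * ‖z‖ := (le_inv_mul_iff₀ hc).mpr hz
    linarith
  calc |eguchiHanson ε z - ‖z‖ ^ 2|
      ≤ ε ^ 2 / ‖z‖ ^ 2 := abs_eguchiHanson_sub_norm_sq_le ε (norm_pos_iff.mp hnorm)
    _ = (1 + c⁻¹) ^ 2 * ε ^ 2 * ((1 + c⁻¹) * ‖z‖)⁻¹ ^ 2 := by field_simp
    _ ≤ (1 + c⁻¹) ^ 2 * ε ^ 2 * (√ε + ‖z‖)⁻¹ ^ 2 := by gcongr

/-- There is a constant `C > 0` such that for every `ε ∈ (0,1]` and every `z` with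
`‖z‖ ≥ 2`, the error term satisfies `|F_ε(z) − ‖z‖²| ≤ C·ε²·(√ε + ‖z‖)⁻²`. -/
theorem eguchiHanson_error_bound_far :
    ∃ C : ℝ, 0 < C ∧ ∀ ε : ℝ, 0 < ε → ε ≤ 1 →
      ∀ z : EuclideanSpace ℂ (Fin 2), 2 ≤ ‖z‖ →
        |eguchiHanson ε z - ‖z‖ ^ 2| ≤ C * ε ^ 2 * (Real.sqrt ε + ‖z‖)⁻¹ ^ 2 :=
  ⟨(1 + 2⁻¹) ^ 2, by positivity, fun _ hε hε_le_one _ hz ↦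
    eguchiHanson_error_bound_far_general two_pos hε
      (by linarith [Real.sqrt_le_one.mpr hε_le_one])⟩
end

section
/- Let λ : ℕ → ℝ be a nondecreasing sequence indexed by the positive integers, let λ' > 0 with λ_1 ≥ λ', and let A > 0. Assume that for every t ∈ (0,1] the series Σ_{i≥1} exp(−t·λ_i) converges and Σ_{i≥1} exp(−t·λ_i) ≤ A·t⁻². Then for every k ≥ 1, λ_k ≥ A^{-1/2}·λ'·exp(−λ'/2)·√k. -/
open Real

/-!
Each of the `k` eigenvalues up to `L = λ_k` contributes at least `exp (-t * L)` to the heat trace at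
time `t`. The time `t = λ' / L` lies in `(0, 1]`, and there the heat trace bound reads
`k * exp (-λ') ≤ A * (L / λ') ^ 2`, which is solved for `L`.
-/

/-- The heat trace `∑ᵢ exp (-t μᵢ)` of the spectrum `μ` converges and is at most `A t⁻ᵖ` for small
times `t ∈ (0, 1]`; on a closed manifold `p` is half the dimension. Convergence is part of the
notion, since `∑'` is `0` for a divergent series. -/
def HeatTraceBound {ι : Type*} (μ : ι → ℝ) (A p : ℝ) : Prop :=
  ∀ t : ℝ, 0 < t → t ≤ 1 →
    Summable (fun i => exp (-(t * μ i))) ∧ ∑' i, exp (-(t * μ i)) ≤ A * t⁻¹ ^ p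

section HeatTrace

variable {ι : Type*} {μ : ι → ℝ} {s : Finset ι} {L : ℝ}

theorem card_mul_exp_neg_le_tsum {t : ℝ} (ht : 0 ≤ t)
    (hsum : Summable fun i => exp (-(t * μ i))) (hs : ∀ i ∈ s, μ i ≤ L) :
    s.card * exp (-(t * L)) ≤ ∑' i, exp (-(t * μ i)) :=
  calc s.card * exp (-(t * L))
      = s.card • exp (-(t * L)) := (nsmul_eq_mul _ _).symm
    _ ≤ ∑ i ∈ s, exp (-(t * μ i)) := s.card_nsmul_le_sum _ _ fun i hi => by
        gcongr
        exact hs i hi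
    _ ≤ ∑' i, exp (-(t * μ i)) := hsum.sum_le_tsum s fun _ _ => (exp_pos _).le

theorem HeatTraceBound.card_mul_exp_neg_le {A p c : ℝ} (hμ : HeatTraceBound μ A p)
    (hc : 0 < c) (hcL : c ≤ L) (hs : ∀ i ∈ s, μ i ≤ L) :
    s.card * exp (-c) ≤ A * (L / c) ^ p := by
  have hL : 0 < L := hc.trans_le hcL
  have ht : 0 < c / L := div_pos hc hL
  obtain ⟨hsum, hle⟩ := hμ (c / L) ht ((div_le_one hL).2 hcL)
  have hcard := (card_mul_exp_neg_le_tsum ht.le hsum hs).trans hle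
  rwa [div_mul_cancel₀ c hL.ne', inv_div] at hcard

end HeatTrace

theorem rpow_mul_exp_mul_rpow_le_of_mul_exp_neg_le {A p c x L : ℝ} (hA : 0 < A) (hp : 0 < p)
    (hc : 0 < c) (hx : 0 ≤ x) (hL : 0 ≤ L) (h : x * exp (-c) ≤ A * (L / c) ^ p) :
    A ^ (-1 / p) * c * exp (-c / p) * x ^ (1 / p) ≤ L := by
  have hroot : (A⁻¹ * exp (-c) * x) ^ p⁻¹ ≤ L / c := by
    rw [rpow_inv_le_iff_of_pos (by positivity) (by positivity) hp, mul_assoc,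
      inv_mul_le_iff₀ hA, mul_comm (exp _)]
    exact h
  have hsplit : (A⁻¹ * exp (-c) * x) ^ p⁻¹ = A ^ (-1 / p) * exp (-c / p) * x ^ (1 / p) := by
    rw [mul_rpow (by positivity) hx, mul_rpow (by positivity) (exp_pos _).le, inv_rpow hA.le,
      ← rpow_neg hA.le, ← exp_mul, neg_div, one_div, ← div_eq_mul_inv]
  rw [hsplit, le_div_iff₀ hc] at hroot
  linarith

theorem eigenvalue_lower_bound_general {lam : ℕ → ℝ} {lam' A p : ℝ} (hp : 0 < p)
    (hmono : MonotoneOn lam (Set.Ici 1)) (hlam' : 0 < lam') (h1 : lam' ≤ lam 1) (hA : 0 < A)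
    (hheat : HeatTraceBound (fun i => lam (i + 1)) A p) {k : ℕ} (hk : 1 ≤ k) :
    A ^ (-1 / p) * lam' * exp (-lam' / p) * (k : ℝ) ^ (1 / p) ≤ lam k := by
  have hlam'k : lam' ≤ lam k := h1.trans (hmono Set.self_mem_Ici hk hk)
  have hinit : ∀ i ∈ Finset.range k, lam (i + 1) ≤ lam k := fun i hi =>
    hmono (Nat.le_add_left 1 i) hk (Finset.mem_range.1 hi)
  have hcount := hheat.card_mul_exp_neg_le hlam' hlam'k hinit
  rw [Finset.card_range] at hcount
  exact rpow_mul_exp_mul_rpow_le_of_mul_exp_neg_le hA hp hlam' k.cast_nonneg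
    (hlam'.le.trans hlam'k) hcount

/-- Abstract eigenvalue lower bound: if `λ` is a nondecreasing sequence (indexed by the
positive integers) with `λ₁ ≥ λ' > 0`, and the heat trace satisfies the uniform bound
`Σ_{i≥1} exp(−t·λᵢ) ≤ A·t⁻²` for all `t ∈ (0,1]`, then
`λ_k ≥ A^{-1/2}·λ'·exp(−λ'/2)·√k` for every `k ≥ 1`. -/
theorem eigenvalue_lower_bound (lam : ℕ → ℝ) (lam' A : ℝ)
    (hmono : ∀ i j : ℕ, 1 ≤ i → i ≤ j → lam i ≤ lam j)
    (hlam' : 0 < lam') (h1 : lam' ≤ lam 1) (hA : 0 < A)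
    (hsum : ∀ t : ℝ, 0 < t → t ≤ 1 →
      Summable (fun i : ℕ => Real.exp (-(t * lam (i + 1)))) ∧
      ∑' i : ℕ, Real.exp (-(t * lam (i + 1))) ≤ A * t⁻¹ ^ 2) :
    ∀ k : ℕ, 1 ≤ k →
      A ^ (-(1 : ℝ) / 2) * lam' * Real.exp (-lam' / 2) * Real.sqrt k ≤ lam k := by
  intro k hk
  simpa only [sqrt_eq_rpow] using eigenvalue_lower_bound_general two_pos
    (fun i hi j _ => hmono i j hi) hlam' h1 hA (by simpa only [HeatTraceBound, rpow_two]) hk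
end
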